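/- There exist constants ε > 0 and c > 0, depending only on L, η, β, κ, τ, m, δ and p, such that for every smooth solution (u, θ, q) of the thermoviscoelastic system with second sound satisfying boundary conditions (D), the Lyapunov functional L₁(t) = E₁(t) + E₂(t) + ε F₁(t) satisfies L₁(t) ≥ 0 and L₁′(t) ≤ −c E₁(t) for all t > 0. -/

import Mathlib

open MeasureTheory Set intervalIntegral

noncomputable section

/-- Time derivative of a function of `(x, t)` (curried as `x ↦ t ↦ f x t`). -/
def pdt (f : ℝ → ℝ → ℝ) : ℝ → ℝ → ℝ := fun x t => deriv (f x) t

/-- Space derivative of a function of `(x, t)`. -/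
def pdx (f : ℝ → ℝ → ℝ) : ℝ → ℝ → ℝ := fun x t => deriv (fun y => f y t) x

/-- A smooth solution of the thermoviscoelastic system with second sound:
`u, θ, q` are `C^∞` and the three PDEs hold on `(0, L) × (0, ∞)`. -/
def IsSmoothSol (L η β κ τ : ℝ) (m δ p : ℝ → ℝ) (u θ q : ℝ → ℝ → ℝ) : Prop :=
  ContDiff ℝ (⊤ : ℕ∞) (Function.uncurry u) ∧ ContDiff ℝ (⊤ : ℕ∞) (Function.uncurry θ) ∧
    ContDiff ℝ (⊤ : ℕ∞) (Function.uncurry q) ∧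
    ∀ x ∈ Ioo (0 : ℝ) L, ∀ t : ℝ, 0 < t →
      (m x * pdt (pdt u) x t
          - pdx (fun y s => p y * pdx u y s + 2 * δ y * pdt (pdx u) y s) x t
          + η * pdx θ x t = 0) ∧
      (pdt θ x t + κ * pdx q x t + η * pdt (pdx u) x t = 0) ∧
      (τ * pdt q x t + β * q x t + κ * pdx θ x t = 0)

/-- Boundary conditions (D): clamped structure, temperature zero at both ends. -/
def BCD (L : ℝ) (u θ : ℝ → ℝ → ℝ) : Prop :=
  ∀ t : ℝ, 0 ≤ t → u 0 t = 0 ∧ u L t = 0 ∧ θ 0 t = 0 ∧ θ L t = 0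

/-- The first-order energy `E₁`. -/
def energy1 (L τ : ℝ) (m p : ℝ → ℝ) (u θ q : ℝ → ℝ → ℝ) (t : ℝ) : ℝ :=
  (1 / 2) * ((∫ x in (0 : ℝ)..L, p x * (pdx u x t) ^ 2)
    + (∫ x in (0 : ℝ)..L, m x * (pdt u x t) ^ 2)
    + (∫ x in (0 : ℝ)..L, (θ x t) ^ 2)
    + τ * ∫ x in (0 : ℝ)..L, (q x t) ^ 2)

/-- The second-order energy `E₂`. -/
def energy2 (L τ : ℝ) (m p : ℝ → ℝ) (u θ q : ℝ → ℝ → ℝ) (t : ℝ) : ℝ :=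
  (1 / 2) * ((∫ x in (0 : ℝ)..L, p x * (pdt (pdx u) x t) ^ 2)
    + (∫ x in (0 : ℝ)..L, m x * (pdt (pdt u) x t) ^ 2)
    + (∫ x in (0 : ℝ)..L, (pdt θ x t) ^ 2)
    + τ * ∫ x in (0 : ℝ)..L, (pdt q x t) ^ 2)

/-- The auxiliary functional `F₁`. -/
def F1 (L : ℝ) (m δ : ℝ → ℝ) (u : ℝ → ℝ → ℝ) (t : ℝ) : ℝ :=
  (∫ x in (0 : ℝ)..L, m x * pdt u x t * u x t)
    + ∫ x in (0 : ℝ)..L, δ x * (pdx u x t) ^ 2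

/-! ### Calculus of partial derivatives -/

/-- Joint smoothness. -/
def Sm (f : ℝ → ℝ → ℝ) : Prop := ContDiff ℝ (⊤ : ℕ∞) (Function.uncurry f)

lemma Sm.hasDerivAt_t' {f : ℝ → ℝ → ℝ} (hf : Sm f) (x t : ℝ) :
    HasDerivAt (f x) (fderiv ℝ (Function.uncurry f) (x, t) (0, 1)) t := by
  have h1 : HasFDerivAt (Function.uncurry f) (fderiv ℝ (Function.uncurry f) (x, t)) (x, t) :=
    (hf.differentiable (by simp) (x, t)).hasFDerivAt
  have h2 : HasDerivAt (fun s : ℝ => (x, s)) ((0 : ℝ), (1 : ℝ)) t :=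
    (hasDerivAt_const t x).prodMk (hasDerivAt_id t)
  exact h1.comp_hasDerivAt t h2

lemma Sm.hasDerivAt_x' {f : ℝ → ℝ → ℝ} (hf : Sm f) (x t : ℝ) :
    HasDerivAt (fun y => f y t) (fderiv ℝ (Function.uncurry f) (x, t) (1, 0)) x := by
  have h1 : HasFDerivAt (Function.uncurry f) (fderiv ℝ (Function.uncurry f) (x, t)) (x, t) :=
    (hf.differentiable (by simp) (x, t)).hasFDerivAt
  have h2 : HasDerivAt (fun s : ℝ => (s, t)) ((1 : ℝ), (0 : ℝ)) x :=
    (hasDerivAt_id x).prodMk (hasDerivAt_const x t)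
  exact h1.comp_hasDerivAt x h2

lemma Sm.hasDerivAt_t {f : ℝ → ℝ → ℝ} (hf : Sm f) (x t : ℝ) :
    HasDerivAt (f x) (pdt f x t) t :=
  (hf.hasDerivAt_t' x t).differentiableAt.hasDerivAt

lemma Sm.hasDerivAt_x {f : ℝ → ℝ → ℝ} (hf : Sm f) (x t : ℝ) :
    HasDerivAt (fun y => f y t) (pdx f x t) x :=
  (hf.hasDerivAt_x' x t).differentiableAt.hasDerivAt

lemma Sm.pdt_eq {f : ℝ → ℝ → ℝ} (hf : Sm f) :
    Function.uncurry (pdt f) = fun z => fderiv ℝ (Function.uncurry f) z (0, 1) := by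
  ext ⟨x, t⟩
  exact (hf.hasDerivAt_t' x t).deriv

lemma Sm.pdx_eq {f : ℝ → ℝ → ℝ} (hf : Sm f) :
    Function.uncurry (pdx f) = fun z => fderiv ℝ (Function.uncurry f) z (1, 0) := by
  ext ⟨x, t⟩
  exact (hf.hasDerivAt_x' x t).deriv

lemma Sm.pdt {f : ℝ → ℝ → ℝ} (hf : Sm f) : Sm (pdt f) := by
  unfold Sm
  rw [hf.pdt_eq]
  exact (hf.fderiv_right (m := (⊤ : ℕ∞)) (by simp)).clm_apply contDiff_const

lemma Sm.pdx {f : ℝ → ℝ → ℝ} (hf : Sm f) : Sm (pdx f) := by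
  unfold Sm
  rw [hf.pdx_eq]
  exact (hf.fderiv_right (m := (⊤ : ℕ∞)) (by simp)).clm_apply contDiff_const

lemma Sm.comm {f : ℝ → ℝ → ℝ} (hf : Sm f) : _root_.pdx (_root_.pdt f) = _root_.pdt (_root_.pdx f) := by
  ext x t
  have hsym : IsSymmSndFDerivAt ℝ (Function.uncurry f) (x, t) :=
    (ContDiff.contDiffAt hf).isSymmSndFDerivAt (by
      simp only [minSmoothness_of_isRCLikeNormedField]; exact WithTop.coe_le_coe.2 (le_top : (2 : ℕ∞) ≤ ⊤))
  have hd : DifferentiableAt ℝ (fderiv ℝ (Function.uncurry f)) (x, t) :=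
    ((hf.fderiv_right (m := (⊤ : ℕ∞)) (by simp)).differentiable (by simp)) (x, t)
  have e1 := (hf.pdt.hasDerivAt_x' x t).deriv
  have e2 := (hf.pdx.hasDerivAt_t' x t).deriv
  rw [hf.pdt_eq] at e1
  rw [hf.pdx_eq] at e2
  rw [fderiv_clm_apply hd (differentiableAt_const _)] at e1 e2
  change deriv (fun y => _root_.pdt f y t) x = deriv (_root_.pdx f x) t
  rw [e1, e2]
  simpa using hsym (1, 0) (0, 1)

lemma Sm.cont {f : ℝ → ℝ → ℝ} (hf : Sm f) (t : ℝ) : Continuous (fun x => f x t) := by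
  have : Continuous (Function.uncurry f) := ContDiff.continuous hf
  exact this.comp (by fun_prop : Continuous fun x : ℝ => (x, t))

lemma Sm.mul {f g : ℝ → ℝ → ℝ} (hf : Sm f) (hg : Sm g) : Sm (fun x t => f x t * g x t) :=
  ContDiff.mul hf hg

lemma hasDerivAt_int {a b : ℝ} (hab : a ≤ b) {w : ℝ → ℝ} (hw : ContinuousOn w (Icc a b))
    {f : ℝ → ℝ → ℝ} (hf : Sm f) (t : ℝ) :
    HasDerivAt (fun s => ∫ x in a..b, w x * f x s) (∫ x in a..b, w x * pdt f x t) t := by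
  have hc : ∀ g : ℝ → ℝ → ℝ, Sm g → ∀ s, ContinuousOn (fun x => w x * g x s) (Icc a b) :=
    fun g hg s => hw.mul (hg.cont s).continuousOn
  have hi : ∀ g : ℝ → ℝ → ℝ, Sm g → ∀ s, IntervalIntegrable (fun x => w x * g x s) volume a b :=
    fun g hg s => (hc g hg s).intervalIntegrable_of_Icc hab
  have hcc : ContinuousOn (fun z : ℝ × ℝ => w z.1 * pdt f z.1 z.2) (Icc a b ×ˢ Icc (t-1) (t+1)) := by
    apply ContinuousOn.mul
    · exact hw.comp continuousOn_fst (fun z hz => hz.1)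
    · exact (ContDiff.continuous hf.pdt).continuousOn
  obtain ⟨C, hC⟩ := (isCompact_Icc.prod isCompact_Icc).exists_bound_of_continuousOn hcc
  refine (intervalIntegral.hasDerivAt_integral_of_dominated_loc_of_deriv_le
    (F := fun s x => w x * f x s) (F' := fun s x => w x * pdt f x s) (bound := fun _ => C)
    (s := Icc (t-1) (t+1)) (Icc_mem_nhds (by linarith) (by linarith)) ?_ (hi f hf t) ?_ ?_ ?_ ?_).2
  · exact Filter.Eventually.of_forall fun s => (hi f hf s).def'.aestronglyMeasurable
  · exact (hi _ hf.pdt t).def'.aestronglyMeasurable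
  · refine Filter.Eventually.of_forall fun x hx s hs => ?_
    rw [uIoc_of_le hab] at hx
    exact hC (x, s) ⟨Ioc_subset_Icc_self hx, hs⟩
  · exact intervalIntegrable_const
  · exact Filter.Eventually.of_forall fun x hx s hs => (hf.hasDerivAt_t x s).const_mul (w x)

lemma poincare {L : ℝ} (hL : 0 < L) {f f' : ℝ → ℝ} (hf : ∀ x, HasDerivAt f (f' x) x)
    (hf' : Continuous f') (h0 : f 0 = 0) :
    ∫ x in (0 : ℝ)..L, f x ^ 2 ≤ 4 * L ^ 2 * ∫ x in (0 : ℝ)..L, f' x ^ 2 := by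
  have hfc : Continuous f := continuous_iff_continuousAt.2 fun x => (hf x).continuousAt
  have key : ∫ x in (0 : ℝ)..L, (f x ^ 2 + 2 * (x - L) * (f x * f' x)) = 0 := by
    have := intervalIntegral.integral_eq_sub_of_hasDerivAt (a := 0) (b := L)
      (f := fun x => (x - L) * f x ^ 2)
      (f' := fun x => (f x ^ 2 + 2 * (x - L) * (f x * f' x))) (fun x _ => by
        refine (((hasDerivAt_id x).sub_const L).mul ((hf x).pow 2)).congr_deriv ?_
        simp; ring) (by apply Continuous.intervalIntegrable; fun_prop)
    simpa [h0] using this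
  have h2 : ∫ x in (0 : ℝ)..L, ((1/2) * f x ^ 2 - 2 * L ^ 2 * f' x ^ 2) ≤ 0 := by
    refine le_trans ?_ key.le
    apply intervalIntegral.integral_mono_on hL.le
    · apply Continuous.intervalIntegrable; fun_prop
    · apply Continuous.intervalIntegrable; fun_prop
    · intro x hx
      have h3 : (x - L) ^ 2 * f' x ^ 2 ≤ L ^ 2 * f' x ^ 2 := by
        apply mul_le_mul_of_nonneg_right _ (sq_nonneg _)
        nlinarith [hx.1, hx.2]
      nlinarith [sq_nonneg (f x + 2 * (x - L) * f' x)]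
  rw [intervalIntegral.integral_sub, intervalIntegral.integral_const_mul,
    intervalIntegral.integral_const_mul] at h2
  · linarith
  · apply Continuous.intervalIntegrable; fun_prop
  · apply Continuous.intervalIntegrable; fun_prop

/-! ### Strong form of the system -/

/-- The flux `p u_x + 2 δ u_xt`. -/
def flux (δ p : ℝ → ℝ) (u : ℝ → ℝ → ℝ) (x t : ℝ) : ℝ :=
  p x * pdx u x t + 2 * δ x * pdt (pdx u) x t

/-- Strong solutions: the flux is genuinely differentiable. -/
structure Strong (L η β κ τ : ℝ) (m δ p : ℝ → ℝ) (u θ q : ℝ → ℝ → ℝ) : Prop where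
  su : Sm u
  sθ : Sm θ
  sq : Sm q
  e1 : ∀ t, 0 < t → ∀ x ∈ Ioo 0 L, HasDerivAt (fun y => flux δ p u y t)
    (m x * pdt (pdt u) x t + η * pdx θ x t) x
  e2 : ∀ t, 0 < t → ∀ x ∈ Ioo 0 L, pdt θ x t + κ * pdx q x t + η * pdt (pdx u) x t = 0
  e3 : ∀ t, 0 < t → ∀ x ∈ Ioo 0 L, τ * pdt q x t + β * q x t + κ * pdx θ x t = 0
  bu0 : ∀ t, 0 < t → u 0 t = 0
  buL : ∀ t, 0 < t → u L t = 0
  bθ0 : ∀ t, 0 < t → θ 0 t = 0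
  bθL : ∀ t, 0 < t → θ L t = 0

lemma hasDerivAt_primitive {L : ℝ} {g h : ℝ → ℝ} (hh : ContinuousOn h (Icc 0 L))
    (hg : ∀ x ∈ Icc 0 L, g x = g 0 + ∫ y in (0 : ℝ)..x, h y) :
    ∀ x ∈ Ioo 0 L, HasDerivAt g (h x) x := by
  intro x hx
  have hn : Icc 0 L ∈ nhds x := Icc_mem_nhds hx.1 hx.2
  have hd : HasDerivAt (fun z => ∫ y in (0 : ℝ)..z, h y) (h x) x := by
    apply intervalIntegral.integral_hasDerivAt_right
    · apply ContinuousOn.intervalIntegrable_of_Icc hx.1.le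
      exact hh.mono (Icc_subset_Icc_right hx.2.le)
    · exact ⟨Icc 0 L, hn, hh.aestronglyMeasurable measurableSet_Icc⟩
    · exact hh.continuousAt hn
  refine (hd.const_add (g 0)).congr_of_eventuallyEq ?_
  filter_upwards [hn] with z hz using hg z hz

lemma strong_of_sol {L η β κ τ : ℝ} {m δ p : ℝ → ℝ}
    (hm : ContinuousOn m (Icc 0 L))
    (hδLip : ∃ K, LipschitzOnWith K δ (Icc 0 L))
    (hpLip : ∃ K, LipschitzOnWith K p (Icc 0 L)) {u θ q : ℝ → ℝ → ℝ}
    (hs : IsSmoothSol L η β κ τ m δ p u θ q) (hb : BCD L u θ) :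
    Strong L η β κ τ m δ p u θ q := by
  obtain ⟨su, sθ, sq, h⟩ := hs
  have su : Sm u := su
  have sθ : Sm θ := sθ
  refine ⟨su, sθ, sq, ?_, fun t ht x hx => (h x hx t ht).2.1,
    fun t ht x hx => (h x hx t ht).2.2, fun t ht => (hb t ht.le).1, fun t ht => (hb t ht.le).2.1,
    fun t ht => (hb t ht.le).2.2.1, fun t ht => (hb t ht.le).2.2.2⟩
  intro t ht
  apply hasDerivAt_primitive (h := fun x => m x * pdt (pdt u) x t + η * pdx θ x t)
  · exact (hm.mul (su.pdt.pdt.cont t).continuousOn).add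
      (continuousOn_const.mul (sθ.pdx.cont t).continuousOn)
  · intro x hx
    have hsub : uIcc 0 x ⊆ Icc 0 L := by
      rw [uIcc_of_le hx.1]; exact Icc_subset_Icc_right hx.2
    have acs : ∀ f : ℝ → ℝ → ℝ, Sm f → AbsolutelyContinuousOnInterval (fun y => f y t) 0 x := by
      intro f hf
      apply ContDiffOn.absolutelyContinuousOnInterval
      apply ContDiff.contDiffOn
      have : ContDiff ℝ (⊤ : ℕ∞) (fun y : ℝ => (y, t)) := by fun_prop
      exact (ContDiff.comp hf this).of_le (by exact mod_cast le_top)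
    obtain ⟨K1, hK1⟩ := hδLip
    obtain ⟨K2, hK2⟩ := hpLip
    have acδ := (hK1.mono hsub).absolutelyContinuousOnInterval
    have acp := (hK2.mono hsub).absolutelyContinuousOnInterval
    have ac : AbsolutelyContinuousOnInterval (fun y => flux δ p u y t) 0 x :=
      (acp.mul (acs _ su.pdx)).add ((acδ.const_mul 2).mul (acs _ su.pdx.pdt))
    have hi := ac.integral_deriv_eq_sub
    have hc : ∫ y in (0 : ℝ)..x, deriv (fun y => flux δ p u y t) y
        = ∫ y in (0 : ℝ)..x, (m y * pdt (pdt u) y t + η * pdx θ y t) := by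
      apply intervalIntegral.integral_congr_Ioo_of_le hx.1
      intro y hy
      have := (h y ⟨hy.1, hy.2.trans_le hx.2⟩ t ht).1
      have e : pdx (fun y s => p y * pdx u y s + 2 * δ y * pdt (pdx u) y s) y t
        = deriv (fun y => flux δ p u y t) y := rfl
      rw [e] at this
      dsimp only
      linarith
    rw [hc] at hi
    linarith

section
variable {L η β κ τ : ℝ} {m δ p : ℝ → ℝ} {u θ q : ℝ → ℝ → ℝ}

lemma flux_cont (hδ : ContinuousOn δ (Icc 0 L)) (hp : ContinuousOn p (Icc 0 L)) (su : Sm u)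
    (t : ℝ) : ContinuousOn (fun y => flux δ p u y t) (Icc 0 L) :=
  (hp.mul (su.pdx.cont t).continuousOn).add
    ((continuousOn_const.mul hδ).mul (su.pdx.pdt.cont t).continuousOn)

lemma pdt_zero {f : ℝ → ℝ → ℝ} {x : ℝ} (h : ∀ t, 0 < t → f x t = 0) :
    ∀ t, 0 < t → pdt f x t = 0 := by
  intro t ht
  have : f x =ᶠ[nhds t] fun _ => 0 := by
    filter_upwards [Ioi_mem_nhds ht] with s hs using h s hs
  unfold pdt
  rw [this.deriv_eq]; simp

lemma Strong.dt (hm : ContinuousOn m (Icc 0 L)) (hδ : ContinuousOn δ (Icc 0 L))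
    (hp : ContinuousOn p (Icc 0 L))
    (h : Strong L η β κ τ m δ p u θ q) :
    Strong L η β κ τ m δ p (pdt u) (pdt θ) (pdt q) := by
  refine ⟨h.su.pdt, h.sθ.pdt, h.sq.pdt, ?_, ?_, ?_, pdt_zero h.bu0, pdt_zero h.buL,
    pdt_zero h.bθ0, pdt_zero h.bθL⟩
  · intro t ht
    rw [h.sθ.comm]
    apply hasDerivAt_primitive
      (h := fun x => m x * pdt (pdt (pdt u)) x t + η * pdt (pdx θ) x t)
    · exact (hm.mul (h.su.pdt.pdt.pdt.cont t).continuousOn).add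
        (continuousOn_const.mul (h.sθ.pdx.pdt.cont t).continuousOn)
    · intro x hx
      have hsub : Icc 0 x ⊆ Icc 0 L := Icc_subset_Icc_right hx.2
      have hmi : ∀ (f : ℝ → ℝ → ℝ) (s : ℝ), Sm f →
          IntervalIntegrable (fun y => m y * f y s) volume 0 x := fun f s hf =>
        ((hm.mul (hf.cont s).continuousOn).mono hsub).intervalIntegrable_of_Icc hx.1
      have hηi : ∀ (f : ℝ → ℝ → ℝ) (s : ℝ), Sm f →
          IntervalIntegrable (fun y => η * f y s) volume 0 x := fun f s hf =>
        (continuous_const.mul (hf.cont s)).intervalIntegrable _ _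
      have hfint : ∀ s, 0 < s → flux δ p u x s - flux δ p u 0 s =
          (∫ y in (0 : ℝ)..x, m y * pdt (pdt u) y s) + ∫ y in (0 : ℝ)..x, η * pdx θ y s := by
        intro s hs
        rw [← intervalIntegral.integral_add (hmi _ s h.su.pdt.pdt) (hηi _ s h.sθ.pdx)]
        rw [intervalIntegral.integral_eq_sub_of_hasDerivAt_of_le hx.1
          ((flux_cont hδ hp h.su s).mono hsub)
          (fun y hy => h.e1 s hs y ⟨hy.1, hy.2.trans_le hx.2⟩)]
        exact (hmi _ s h.su.pdt.pdt).add (hηi _ s h.sθ.pdx)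
      have hfl : ∀ y, HasDerivAt (fun s => flux δ p u y s) (flux δ p (pdt u) y t) t := by
        intro y
        unfold flux
        rw [h.su.comm]
        exact ((h.su.pdx.hasDerivAt_t y t).const_mul _).add
          ((h.su.pdx.pdt.hasDerivAt_t y t).const_mul _)
      have d1 := (hfl x).sub (hfl 0)
      have d2 := (hasDerivAt_int hx.1 (hm.mono hsub) h.su.pdt.pdt t).add
        (hasDerivAt_int hx.1 (w := fun _ => η) continuousOn_const h.sθ.pdx t)
      have := d1.unique (d2.congr_of_eventuallyEq (by
        filter_upwards [Ioi_mem_nhds ht] with s hs using hfint s hs))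
      rw [intervalIntegral.integral_add (hmi _ t h.su.pdt.pdt.pdt) (hηi _ t h.sθ.pdx.pdt)]
      linarith
  · intro t ht x hx
    rw [h.su.comm, h.sq.comm]
    have hz := pdt_zero (f := fun x t => pdt θ x t + κ * pdx q x t + η * pdt (pdx u) x t) (x := x)
      (fun s hs => h.e2 s hs x hx) t ht
    rw [← hz]
    exact (((h.sθ.pdt.hasDerivAt_t x t).add ((h.sq.pdx.hasDerivAt_t x t).const_mul κ)).add
      ((h.su.pdx.pdt.hasDerivAt_t x t).const_mul η)).deriv.symm
  · intro t ht x hx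
    rw [h.sθ.comm]
    have hz := pdt_zero (f := fun x t => τ * pdt q x t + β * q x t + κ * pdx θ x t) (x := x)
      (fun s hs => h.e3 s hs x hx) t ht
    rw [← hz]
    exact ((((h.sq.pdt.hasDerivAt_t x t).const_mul τ).add ((h.sq.hasDerivAt_t x t).const_mul β)).add
      ((h.sθ.pdx.hasDerivAt_t x t).const_mul κ)).deriv.symm


lemma Sm.pdt_mul {f g : ℝ → ℝ → ℝ} (hf : Sm f) (hg : Sm g) :
    _root_.pdt (fun x t => f x t * g x t)
      = fun x t => _root_.pdt f x t * g x t + f x t * _root_.pdt g x t := by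
  ext x t
  exact ((hf.hasDerivAt_t x t).mul (hg.hasDerivAt_t x t)).deriv

lemma hasDerivAt_int_sq (hL : 0 < L) {w : ℝ → ℝ} (hw : ContinuousOn w (Icc 0 L))
    {f : ℝ → ℝ → ℝ} (hf : Sm f) (t : ℝ) :
    HasDerivAt (fun s => ∫ x in (0 : ℝ)..L, w x * f x s ^ 2)
      (∫ x in (0 : ℝ)..L, 2 * (w x * (f x t * pdt f x t))) t := by
  have h := hasDerivAt_int hL.le hw (hf.mul hf) t
  rw [hf.pdt_mul hf] at h
  have e1 : (fun s => ∫ x in (0 : ℝ)..L, w x * f x s ^ 2)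
      = fun s => ∫ x in (0 : ℝ)..L, w x * (f x s * f x s) := by
    simp only [pow_two]
  rw [e1]
  refine h.congr_deriv (intervalIntegral.integral_congr fun x _ => ?_)
  dsimp only
  ring

lemma integral_zero_of_deriv (hL : 0 < L) {H h : ℝ → ℝ} (hH : ContinuousOn H (Icc 0 L))
    (hd : ∀ x ∈ Ioo 0 L, HasDerivAt H (h x) x) (hh : ContinuousOn h (Icc 0 L))
    (h0 : H 0 = 0) (hL0 : H L = 0) : ∫ x in (0 : ℝ)..L, h x = 0 := by
  rw [intervalIntegral.integral_eq_sub_of_hasDerivAt_of_le hL.le hH hd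
    (hh.intervalIntegrable_of_Icc hL.le), h0, hL0, sub_zero]

lemma Strong.energy_deriv (hL : 0 < L) (hm : ContinuousOn m (Icc 0 L))
    (hδ : ContinuousOn δ (Icc 0 L)) (hp : ContinuousOn p (Icc 0 L))
    (h : Strong L η β κ τ m δ p u θ q) (t : ℝ) (ht : 0 < t) :
    HasDerivAt (energy1 L τ m p u θ q)
      (-2 * (∫ x in (0 : ℝ)..L, δ x * pdt (pdx u) x t ^ 2) - β * ∫ x in (0 : ℝ)..L, q x t ^ 2) t := by
  have d1 := hasDerivAt_int_sq hL hp h.su.pdx t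
  have d2 := hasDerivAt_int_sq hL hm h.su.pdt t
  have d3 := hasDerivAt_int_sq hL (w := fun _ => 1) continuousOn_const h.sθ t
  have d4 := hasDerivAt_int_sq hL (w := fun _ => 1) continuousOn_const h.sq t
  simp only [one_mul] at d3 d4
  have d := (((d1.add d2).add d3).add (d4.const_mul τ)).const_mul (1 / 2)
  refine d.congr_deriv ?_
  have c1 := (h.su.cont t).continuousOn (s := Icc 0 L)
  have c2 := (h.su.pdx.cont t).continuousOn (s := Icc 0 L)
  have c3 := (h.su.pdt.cont t).continuousOn (s := Icc 0 L)
  have c4 := (h.su.pdx.pdt.cont t).continuousOn (s := Icc 0 L)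
  have c5 := (h.su.pdt.pdt.cont t).continuousOn (s := Icc 0 L)
  have c6 := (h.sθ.cont t).continuousOn (s := Icc 0 L)
  have c7 := (h.sθ.pdx.cont t).continuousOn (s := Icc 0 L)
  have c8 := (h.sθ.pdt.cont t).continuousOn (s := Icc 0 L)
  have c9 := (h.sq.cont t).continuousOn (s := Icc 0 L)
  have c10 := (h.sq.pdt.cont t).continuousOn (s := Icc 0 L)
  have cf := flux_cont hδ hp h.su t
  have hz : ∫ x in (0 : ℝ)..L, ((2 * (p x * (pdx u x t * pdt (pdx u) x t))
      + 2 * (m x * (pdt u x t * pdt (pdt u) x t))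
      + 2 * (θ x t * pdt θ x t) + τ * (2 * (q x t * pdt q x t)))
      + 4 * (δ x * pdt (pdx u) x t ^ 2) + 2 * β * q x t ^ 2) = 0 := by
    apply integral_zero_of_deriv hL
      (H := fun x => 2 * (pdt u x t * flux δ p u x t - η * (pdt u x t * θ x t)
        - κ * (θ x t * q x t)))
    · fun_prop
    · intro x hx
      have f1 := h.e1 t ht x hx
      have f2 := h.e2 t ht x hx
      have f3 := h.e3 t ht x hx
      have g1 := h.su.pdt.hasDerivAt_x x t
      rw [h.su.comm] at g1
      have g2 := h.sθ.hasDerivAt_x x t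
      have g3 := h.sq.hasDerivAt_x x t
      refine ((((g1.mul f1).sub ((g1.mul g2).const_mul η)).sub ((g2.mul g3).const_mul κ)).const_mul
        2).congr_deriv ?_
      unfold flux
      linear_combination -2 * θ x t * f2 - 2 * q x t * f3
    · fun_prop
    · simp [h.bθ0 t ht, pdt_zero h.bu0 t ht]
    · simp [h.bθL t ht, pdt_zero h.buL t ht]
  rw [intervalIntegral.integral_add, intervalIntegral.integral_add, intervalIntegral.integral_add,
    intervalIntegral.integral_add, intervalIntegral.integral_add,
    intervalIntegral.integral_const_mul τ, intervalIntegral.integral_const_mul 4,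
    intervalIntegral.integral_const_mul (2 * β)] at hz
  · linarith
  all_goals
    apply ContinuousOn.intervalIntegrable_of_Icc hL.le
    fun_prop

lemma Strong.F1_deriv (hL : 0 < L) (hm : ContinuousOn m (Icc 0 L))
    (hδ : ContinuousOn δ (Icc 0 L)) (hp : ContinuousOn p (Icc 0 L))
    (h : Strong L η β κ τ m δ p u θ q) (t : ℝ) (ht : 0 < t) :
    HasDerivAt (F1 L m δ u)
      (-(∫ x in (0 : ℝ)..L, p x * pdx u x t ^ 2) + (∫ x in (0 : ℝ)..L, η * (θ x t * pdx u x t))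
        + ∫ x in (0 : ℝ)..L, m x * pdt u x t ^ 2) t := by
  have d1 := hasDerivAt_int hL.le hm (h.su.pdt.mul h.su) t
  rw [h.su.pdt.pdt_mul h.su] at d1
  have d2 := hasDerivAt_int_sq hL hδ h.su.pdx t
  simp only [← mul_assoc (m _) (pdt u _ _) (u _ _)] at d1
  refine (d1.add d2).congr_deriv ?_
  have c1 := (h.su.cont t).continuousOn (s := Icc 0 L)
  have c2 := (h.su.pdx.cont t).continuousOn (s := Icc 0 L)
  have c3 := (h.su.pdt.cont t).continuousOn (s := Icc 0 L)
  have c4 := (h.su.pdx.pdt.cont t).continuousOn (s := Icc 0 L)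
  have c5 := (h.su.pdt.pdt.cont t).continuousOn (s := Icc 0 L)
  have c6 := (h.sθ.cont t).continuousOn (s := Icc 0 L)
  have cf := flux_cont hδ hp h.su t
  have hz : ∫ x in (0 : ℝ)..L, ((m x * (pdt (pdt u) x t * u x t + pdt u x t * pdt u x t)
      + 2 * (δ x * (pdx u x t * pdt (pdx u) x t)) + p x * pdx u x t ^ 2)
      - η * (θ x t * pdx u x t) - m x * pdt u x t ^ 2) = 0 := by
    apply integral_zero_of_deriv hL
      (H := fun x => u x t * flux δ p u x t - η * (u x t * θ x t))
    · fun_prop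
    · intro x hx
      have f1 := h.e1 t ht x hx
      have g1 := h.su.hasDerivAt_x x t
      have g2 := h.sθ.hasDerivAt_x x t
      refine ((g1.mul f1).sub ((g1.mul g2).const_mul η)).congr_deriv ?_
      unfold flux
      ring
    · fun_prop
    · simp [h.bu0 t ht]
    · simp [h.buL t ht]
  rw [intervalIntegral.integral_sub, intervalIntegral.integral_sub, intervalIntegral.integral_add,
    intervalIntegral.integral_add] at hz
  · linarith
  all_goals
    apply ContinuousOn.intervalIntegrable_of_Icc hL.le
    fun_prop

lemma int_mono (hL : 0 < L) {f g : ℝ → ℝ} (hf : ContinuousOn f (Icc 0 L))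
    (hg : ContinuousOn g (Icc 0 L)) (h : ∀ x ∈ Ioo 0 L, f x ≤ g x) :
    ∫ x in (0 : ℝ)..L, f x ≤ ∫ x in (0 : ℝ)..L, g x :=
  intervalIntegral.integral_mono_on_of_le_Ioo hL.le (hf.intervalIntegrable_of_Icc hL.le)
    (hg.intervalIntegrable_of_Icc hL.le) h

/-- Weighted Poincare inequality. -/
lemma wpoincare (hL : 0 < L) {w v : ℝ → ℝ} (hw : ContinuousOn w (Icc 0 L))
    (hv : ContinuousOn v (Icc 0 L)) {M d : ℝ} (hM : 0 < M) (hd : 0 < d)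
    (hwM : ∀ x ∈ Icc 0 L, w x ≤ M) (hvd : ∀ x ∈ Icc 0 L, d ≤ v x)
    {f f' : ℝ → ℝ} (hf : ∀ x, HasDerivAt f (f' x) x)
    (hf' : Continuous f') (h0 : f 0 = 0) :
    ∫ x in (0 : ℝ)..L, w x * f x ^ 2 ≤ M * 4 * L ^ 2 / d * ∫ x in (0 : ℝ)..L, v x * f' x ^ 2 := by
  have hfc : Continuous f := continuous_iff_continuousAt.2 fun x => (hf x).continuousAt
  have c1 := hfc.continuousOn (s := Icc 0 L)
  have c2 := hf'.continuousOn (s := Icc 0 L)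
  have a1 : ∫ x in (0 : ℝ)..L, w x * f x ^ 2 ≤ ∫ x in (0 : ℝ)..L, M * f x ^ 2 := by
    apply int_mono hL (by fun_prop) (by fun_prop)
    intro x hx
    exact mul_le_mul_of_nonneg_right (hwM x (Ioo_subset_Icc_self hx)) (sq_nonneg _)
  have a2 : ∫ x in (0 : ℝ)..L, d * f' x ^ 2 ≤ ∫ x in (0 : ℝ)..L, v x * f' x ^ 2 := by
    apply int_mono hL (by fun_prop) (by fun_prop)
    intro x hx
    exact mul_le_mul_of_nonneg_right (hvd x (Ioo_subset_Icc_self hx)) (sq_nonneg _)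
  rw [intervalIntegral.integral_const_mul] at a1 a2
  have a3 := poincare hL hf hf' h0
  calc _ ≤ M * ∫ x in (0 : ℝ)..L, f x ^ 2 := a1
    _ ≤ M * (4 * L ^ 2 * ∫ x in (0 : ℝ)..L, f' x ^ 2) := by gcongr
    _ = M * 4 * L ^ 2 / d * (d * ∫ x in (0 : ℝ)..L, f' x ^ 2) := by field_simp
    _ ≤ _ := by gcongr

lemma int_nonneg (hL : 0 < L) {w f : ℝ → ℝ} (hw : ∀ x ∈ Icc 0 L, 0 < w x) :
    0 ≤ ∫ x in (0 : ℝ)..L, w x * f x ^ 2 :=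
  intervalIntegral.integral_nonneg hL.le fun x hx => mul_nonneg (hw x hx).le (sq_nonneg _)

lemma Strong.theta_bound (hL : 0 < L) (hκ : 0 < κ)
    (h : Strong L η β κ τ m δ p u θ q) (t : ℝ) (ht : 0 < t) :
    ∫ x in (0 : ℝ)..L, θ x t ^ 2 ≤ 8 * L ^ 2 * (τ ^ 2 + β ^ 2) / κ ^ 2 *
      ((∫ x in (0 : ℝ)..L, q x t ^ 2) + ∫ x in (0 : ℝ)..L, pdt q x t ^ 2) := by
  have a := poincare hL (fun x => h.sθ.hasDerivAt_x x t) (h.sθ.pdx.cont t) (h.bθ0 t ht)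
  have c7 := (h.sθ.pdx.cont t).continuousOn (s := Icc 0 L)
  have c9 := (h.sq.cont t).continuousOn (s := Icc 0 L)
  have c10 := (h.sq.pdt.cont t).continuousOn (s := Icc 0 L)
  have b : ∫ x in (0 : ℝ)..L, pdx θ x t ^ 2 ≤
      ∫ x in (0 : ℝ)..L, 2 * (τ ^ 2 + β ^ 2) / κ ^ 2 * (q x t ^ 2 + pdt q x t ^ 2) := by
    apply int_mono hL (by fun_prop) (by fun_prop)
    intro x hx
    have e : κ * pdx θ x t = -(τ * pdt q x t + β * q x t) := by
      linarith [h.e3 t ht x hx]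
    rw [div_mul_eq_mul_div, le_div_iff₀ (by positivity)]
    have e2 : pdx θ x t ^ 2 * κ ^ 2 = (τ * pdt q x t + β * q x t) ^ 2 := by
      rw [← mul_pow, mul_comm, e]; ring
    rw [e2]
    nlinarith [sq_nonneg (τ * pdt q x t - β * q x t), sq_nonneg (τ * q x t),
      sq_nonneg (β * pdt q x t)]
  rw [intervalIntegral.integral_const_mul, intervalIntegral.integral_add] at b
  · refine a.trans ?_
    refine (mul_le_mul_of_nonneg_left b (by positivity)).trans_eq ?_
    ring
  all_goals
    apply ContinuousOn.intervalIntegrable_of_Icc hL.le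
    fun_prop

lemma Strong.cross_bound (hL : 0 < L) (hp : ContinuousOn p (Icc 0 L)) {P : ℝ} (hP : 0 < P)
    (hpP : ∀ x ∈ Icc 0 L, P ≤ p x)
    (h : Strong L η β κ τ m δ p u θ q) (t : ℝ) :
    ∫ x in (0 : ℝ)..L, η * (θ x t * pdx u x t) ≤
      1 / 2 * (∫ x in (0 : ℝ)..L, p x * pdx u x t ^ 2)
        + η ^ 2 / (2 * P) * ∫ x in (0 : ℝ)..L, θ x t ^ 2 := by
  have c2 := (h.su.pdx.cont t).continuousOn (s := Icc 0 L)
  have c6 := (h.sθ.cont t).continuousOn (s := Icc 0 L)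
  rw [← intervalIntegral.integral_const_mul, ← intervalIntegral.integral_const_mul,
    ← intervalIntegral.integral_add]
  · apply int_mono hL (by fun_prop) (by fun_prop)
    intro x hx
    have h1 : P * pdx u x t ^ 2 ≤ p x * pdx u x t ^ 2 :=
      mul_le_mul_of_nonneg_right (hpP x (Ioo_subset_Icc_self hx)) (sq_nonneg _)
    have h2 : 0 ≤ (P * pdx u x t - η * θ x t) ^ 2 / (2 * P) := by positivity
    have h3 : (P * pdx u x t - η * θ x t) ^ 2 / (2 * P) = 1 / 2 * (P * pdx u x t ^ 2)
        - η * (θ x t * pdx u x t) + η ^ 2 / (2 * P) * θ x t ^ 2 := by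
      field_simp; ring
    linarith
  all_goals
    apply ContinuousOn.intervalIntegrable_of_Icc hL.le
    fun_prop

lemma F1_lower (hL : 0 < L) (hm : ContinuousOn m (Icc 0 L))
    (hmpos : ∀ x ∈ Icc (0 : ℝ) L, 0 < m x)
    (hδpos : ∀ x ∈ Icc (0 : ℝ) L, 0 < δ x) (su : Sm u) (t : ℝ) :
    -(1 / 2) * (∫ x in (0 : ℝ)..L, m x * pdt u x t ^ 2)
      - 1 / 2 * (∫ x in (0 : ℝ)..L, m x * u x t ^ 2) ≤ F1 L m δ u t := by
  have c1 := (su.cont t).continuousOn (s := Icc 0 L)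
  have c3 := (su.pdt.cont t).continuousOn (s := Icc 0 L)
  have h1 := int_nonneg hL (f := fun x => pdx u x t) hδpos
  unfold F1
  refine le_trans ?_ (le_add_of_nonneg_right h1)
  rw [← intervalIntegral.integral_const_mul, ← intervalIntegral.integral_const_mul,
    ← intervalIntegral.integral_sub]
  · apply int_mono hL (by fun_prop) (by fun_prop)
    intro x hx
    nlinarith [mul_nonneg (hmpos x (Ioo_subset_Icc_self hx)).le (sq_nonneg (pdt u x t + u x t))]
  all_goals
    apply ContinuousOn.intervalIntegrable_of_Icc hL.le
    fun_prop

end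

lemma exists_bounds {L : ℝ} (hL : 0 < L) {w : ℝ → ℝ} (hw : ContinuousOn w (Icc 0 L))
    (hpos : ∀ x ∈ Icc (0 : ℝ) L, 0 < w x) :
    ∃ a > 0, ∃ b > 0, ∀ x ∈ Icc (0 : ℝ) L, a ≤ w x ∧ w x ≤ b := by
  have hne : (Icc (0 : ℝ) L).Nonempty := ⟨0, le_rfl, hL.le⟩
  obtain ⟨x, hx, h1⟩ := isCompact_Icc.exists_isMinOn hne hw
  obtain ⟨y, hy, h2⟩ := isCompact_Icc.exists_isMaxOn hne hw
  exact ⟨w x, hpos x hx, w y, hpos y hy, fun z hz => ⟨h1 hz, h2 hz⟩⟩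

theorem lyapunov_functional_estimate
    (L η β κ τ : ℝ) (hL : 0 < L) (hη : 0 < η) (hβ : 0 < β) (hκ : 0 < κ) (hτ : 0 < τ)
    (m δ p : ℝ → ℝ)
    (hmLip : ∃ K, LipschitzOnWith K m (Icc 0 L))
    (hδLip : ∃ K, LipschitzOnWith K δ (Icc 0 L))
    (hpLip : ∃ K, LipschitzOnWith K p (Icc 0 L))
    (hmpos : ∀ x ∈ Icc (0 : ℝ) L, 0 < m x)
    (hδpos : ∀ x ∈ Icc (0 : ℝ) L, 0 < δ x)
    (hppos : ∀ x ∈ Icc (0 : ℝ) L, 0 < p x)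
    :
    ∃ ε > (0 : ℝ), ∃ c > (0 : ℝ),
      ∀ u θ q : ℝ → ℝ → ℝ,
        IsSmoothSol L η β κ τ m δ p u θ q → BCD L u θ →
          ∀ t : ℝ, 0 < t →
            0 ≤ energy1 L τ m p u θ q t + energy2 L τ m p u θ q t + ε * F1 L m δ u t ∧
            HasDerivAt
              (fun s => energy1 L τ m p u θ q s + energy2 L τ m p u θ q s
                + ε * F1 L m δ u s)
              (deriv (fun s => energy1 L τ m p u θ q s + energy2 L τ m p u θ q s
                + ε * F1 L m δ u s) t) t ∧
            deriv (fun s => energy1 L τ m p u θ q s + energy2 L τ m p u θ q s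
                + ε * F1 L m δ u s) t
              ≤ -c * energy1 L τ m p u θ q t := by
  have hm : ContinuousOn m (Icc 0 L) := hmLip.choose_spec.continuousOn
  have hδ : ContinuousOn δ (Icc 0 L) := hδLip.choose_spec.continuousOn
  have hp : ContinuousOn p (Icc 0 L) := hpLip.choose_spec.continuousOn
  obtain ⟨_, _, M, hM, hmM⟩ := exists_bounds hL hm hmpos
  obtain ⟨d, hd, _, _, hδd⟩ := exists_bounds hL hδ hδpos
  obtain ⟨P, hP, _, _, hpP⟩ := exists_bounds hL hp hppos
  obtain ⟨A, hA⟩ : ∃ A, A = M * 4 * L ^ 2 / d := ⟨_, rfl⟩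
  obtain ⟨B, hB⟩ : ∃ B, B = M * 4 * L ^ 2 / P := ⟨_, rfl⟩
  obtain ⟨C, hC⟩ : ∃ C, C = 8 * L ^ 2 * (τ ^ 2 + β ^ 2) / κ ^ 2 := ⟨_, rfl⟩
  obtain ⟨G, hG⟩ : ∃ G, G = η ^ 2 / (2 * P) := ⟨_, rfl⟩
  have hA0 : 0 < A := by rw [hA]; positivity
  have hB0 : 0 < B := by rw [hB]; positivity
  have hC0 : 0 < C := by rw [hC]; positivity
  have hG0 : 0 < G := by rw [hG]; positivity
  -- the small parameter
  obtain ⟨ε, hε, hε1, hεA, hεB, hεC⟩ : ∃ ε > 0, ε ≤ 1 ∧ ε * A ≤ 1 ∧ ε * B ≤ 1 ∧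
      ε * ((G + 1) * C) ≤ β / 2 := by
    refine ⟨min (min 1 (1 / A)) (min (1 / B) (β / 2 / ((G + 1) * C))), ?_, ?_, ?_, ?_, ?_⟩
    · positivity
    · exact (min_le_left _ _).trans (min_le_left _ _)
    · rw [← le_div_iff₀ hA0]
      exact (min_le_left _ _).trans (min_le_right _ _)
    · rw [← le_div_iff₀ hB0]
      exact (min_le_right _ _).trans (min_le_left _ _)
    · rw [← le_div_iff₀ (by positivity)]
      exact (min_le_right _ _).trans (min_le_right _ _)
  obtain ⟨c, hc, hcε, hcA, hcτ⟩ : ∃ c > 0, c ≤ ε ∧ c * A ≤ 2 ∧ c * τ ≤ β := by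
    refine ⟨min ε (min (2 / A) (β / τ)), ?_, min_le_left _ _, ?_, ?_⟩
    · positivity
    · rw [← le_div_iff₀ hA0]
      exact (min_le_right _ _).trans (min_le_left _ _)
    · rw [← le_div_iff₀ hτ]
      exact (min_le_right _ _).trans (min_le_right _ _)
  refine ⟨ε, hε, c, hc, ?_⟩
  intro u θ q hsol hbc t ht
  have hs := strong_of_sol hm hδLip hpLip hsol hbc
  have hs2 := hs.dt hm hδ hp
  have hE2 : energy2 L τ m p u θ q = energy1 L τ m p (pdt u) (pdt θ) (pdt q) := by
    ext s
    unfold energy1 energy2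
    rw [hs.su.comm]
  have dE1 := hs.energy_deriv hL hm hδ hp t ht
  have dE2 := hs2.energy_deriv hL hm hδ hp t ht
  rw [← hE2] at dE2
  have dF := hs.F1_deriv hL hm hδ hp t ht
  have dd := (dE1.add dE2).add (dF.const_mul ε)
  have dd' : HasDerivAt (fun s => energy1 L τ m p u θ q s + energy2 L τ m p u θ q s
                + ε * F1 L m δ u s) _ t := dd
  have one_pos' : ∀ x ∈ Icc (0 : ℝ) L, (0 : ℝ) < (fun _ => 1) x := fun _ _ => one_pos
  have bV := wpoincare hL hm hδ hM hd (fun x hx => (hmM x hx).2) (fun x hx => (hδd x hx).1)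
    (fun x => hs.su.pdt.hasDerivAt_x x t) (hs.su.pdt.pdx.cont t) (pdt_zero hs.bu0 t ht)
  have bW := wpoincare hL hm hp hM hP (fun x hx => (hmM x hx).2) (fun x hx => (hpP x hx).1)
    (fun x => hs.su.hasDerivAt_x x t) (hs.su.pdx.cont t) (hs.bu0 t ht)
  have bΘ := hs.theta_bound hL hκ t ht
  have bX := hs.cross_bound hL hp hP (fun x hx => (hpP x hx).1) t
  have bF := F1_lower hL hm hmpos hδpos hs.su t
  have nU := int_nonneg hL (f := fun x => pdx u x t) hppos
  have nV := int_nonneg hL (f := fun x => pdt u x t) hmpos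
  have nΘ := int_nonneg hL (f := fun x => θ x t) one_pos'
  have nQ := int_nonneg hL (f := fun x => q x t) one_pos'
  have nQ2 := int_nonneg hL (f := fun x => pdt q x t) one_pos'
  have nD := int_nonneg hL (f := fun x => pdt (pdx u) x t) hδpos
  have nD2 := int_nonneg hL (f := fun x => pdt (pdx (pdt u)) x t) hδpos
  have n1 := int_nonneg hL (f := fun x => pdt (pdx u) x t) hppos
  have n2 := int_nonneg hL (f := fun x => pdt (pdt u) x t) hmpos
  have n3 := int_nonneg hL (f := fun x => pdt θ x t) one_pos'
  simp only [one_mul] at nΘ nQ nQ2 n3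
  rw [← hA, hs.su.comm] at bV
  rw [← hB] at bW
  rw [← hC] at bΘ
  rw [← hG] at bX
  refine ⟨?_, dd'.differentiableAt.hasDerivAt, ?_⟩
  · have e1 := mul_le_mul_of_nonneg_left bF hε.le
    have e2 : 0 ≤ energy2 L τ m p u θ q t := by
      unfold energy2
      have := mul_nonneg hτ.le nQ2
      linarith
    unfold energy1
    generalize energy2 L τ m p u θ q t = E at *
    generalize F1 L m δ u t = F at *
    generalize (∫ x in (0 : ℝ)..L, p x * pdx u x t ^ 2) = U at *
    generalize (∫ x in (0 : ℝ)..L, m x * pdt u x t ^ 2) = V at *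
    generalize (∫ x in (0 : ℝ)..L, m x * u x t ^ 2) = W at *
    have e3 := mul_le_mul_of_nonneg_left bW hε.le
    have e4 := mul_le_mul_of_nonneg_right hεB nU
    have e5 := mul_le_mul_of_nonneg_right hε1 nV
    have e6 := mul_nonneg hτ.le nQ
    linarith
  · rw [dd'.deriv]
    unfold energy1
    clear dd dd' dE1 dE2 dF bF bW hE2
    generalize (∫ x in (0 : ℝ)..L, p x * pdx u x t ^ 2) = U at *
    generalize (∫ x in (0 : ℝ)..L, m x * pdt u x t ^ 2) = V at *
    generalize (∫ x in (0 : ℝ)..L, θ x t ^ 2) = T at *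
    generalize (∫ x in (0 : ℝ)..L, q x t ^ 2) = Q at *
    generalize (∫ x in (0 : ℝ)..L, pdt q x t ^ 2) = Q2 at *
    generalize (∫ x in (0 : ℝ)..L, δ x * pdt (pdx u) x t ^ 2) = D at *
    generalize (∫ x in (0 : ℝ)..L, δ x * pdt (pdx (pdt u)) x t ^ 2) = D2 at *
    generalize (∫ x in (0 : ℝ)..L, η * (θ x t * pdx u x t)) = X at *
    have e1 := mul_le_mul_of_nonneg_left bX hε.le
    have e2 := mul_le_mul_of_nonneg_left bV hε.le
    have e3 := mul_le_mul_of_nonneg_right hεA nD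
    have e4 := mul_le_mul_of_nonneg_left bΘ (by positivity : 0 ≤ ε * (G + 1))
    have e5 := mul_le_mul_of_nonneg_right hεC (add_nonneg nQ nQ2)
    have e6 := mul_le_mul_of_nonneg_right hcε nU
    have e7 := mul_le_mul_of_nonneg_right hcε nΘ
    have e8 := mul_le_mul_of_nonneg_left bV hc.le
    have e9 := mul_le_mul_of_nonneg_right hcA nD
    have e10 := mul_le_mul_of_nonneg_right hcτ nQ
    have e11 := mul_nonneg hβ.le nQ2
    have e12 := mul_nonneg hε.le nΘ
    linarith
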